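/- Under the stated setup and assumptions, the canonical angles θ_1 ≤ … ≤ θ_k between the column spaces of U_k and Û satisfy sin θ_j ≤ γ_j^{2q+1}·‖Ω_2Ω_1†‖₂ / √(1 + γ_j^{4q+2}·‖Ω_2Ω_1†‖₂²) for every j = 1,…,k. -/

import Mathlib

open scoped ENNReal
open Matrix

/-- The `j`-th largest singular value (0-indexed) of a complex matrix,
obtained as the decreasingly sorted square roots of the eigenvalues of `Mᴴ * M`. -/
noncomputable def sval {m n : ℕ} (M : Matrix (Fin m) (Fin n) ℂ) (j : ℕ) : ℝ :=
  (List.insertionSort (· ≥ ·)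
    ((List.ofFn (Matrix.isHermitian_conjTranspose_mul_self M).eigenvalues).map Real.sqrt)).getD j 0

/-- The Schatten-`p` norm (`p = ∞` gives the spectral norm). -/
noncomputable def schatten {m n : ℕ} (p : ℝ≥0∞) (M : Matrix (Fin m) (Fin n) ℂ) : ℝ :=
  if p = ⊤ then sval M 0
  else (∑ j ∈ Finset.range n, sval M j ^ p.toReal) ^ (1 / p.toReal)

/-- Moore–Penrose pseudoinverse of a full-row-rank matrix. -/
noncomputable def rpinv {a b : ℕ} (M : Matrix (Fin a) (Fin b) ℂ) : Matrix (Fin b) (Fin a) ℂ :=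
  Mᴴ * (M * Mᴴ)⁻¹

/-- Rectangular diagonal matrix with entries `σ (off), σ (off+1), …` on the diagonal. -/
noncomputable def diagRect (σ : ℕ → ℝ) (off a b : ℕ) : Matrix (Fin a) (Fin b) ℂ :=
  Matrix.of fun i j => if (i : ℕ) = (j : ℕ) then (σ (off + (i : ℕ)) : ℂ) else 0

/-- The first `b` columns of a matrix with `b + c` columns. -/
def colsL {a b c : ℕ} (M : Matrix (Fin a) (Fin (b + c)) ℂ) : Matrix (Fin a) (Fin b) ℂ :=
  M.submatrix id (Fin.castAdd c)

/-- The last `c` columns of a matrix with `b + c` columns. -/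
def colsR {a b c : ℕ} (M : Matrix (Fin a) (Fin (b + c)) ℂ) : Matrix (Fin a) (Fin c) ℂ :=
  M.submatrix id (Fin.natAdd b)

/-- The squared Euclidean norm of a complex vector. -/
noncomputable def sumSq {ι : Type*} [Fintype ι] (x : ι → ℂ) : ℝ := ∑ i, ‖x i‖ ^ 2

section SumSq

variable {ι κ : Type*} [Fintype ι] [Fintype κ]

lemma sumSq_nonneg (x : ι → ℂ) : 0 ≤ sumSq x := Finset.sum_nonneg fun _ _ => sq_nonneg _

lemma sumSq_pos {x : ι → ℂ} (hx : x ≠ 0) : 0 < sumSq x := by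
  obtain ⟨i, hi⟩ := Function.ne_iff.mp hx
  exact Finset.sum_pos' (fun _ _ => sq_nonneg _) ⟨i, Finset.mem_univ i, by
    have : 0 < ‖x i‖ := norm_pos_iff.mpr hi
    positivity⟩

lemma ofReal_sumSq (x : ι → ℂ) : (sumSq x : ℂ) = star x ⬝ᵥ x := by
  simp only [sumSq, dotProduct, Pi.star_apply, RCLike.star_def, Complex.conj_mul',
    Complex.ofReal_sum, Complex.ofReal_pow]

lemma ofReal_sumSq_mulVec (M : Matrix κ ι ℂ) (x : ι → ℂ) :
    (sumSq (M *ᵥ x) : ℂ) = star x ⬝ᵥ ((Mᴴ * M) *ᵥ x) := by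
  rw [ofReal_sumSq, star_mulVec, ← mulVec_mulVec, ← dotProduct_mulVec]

lemma sumSq_mulVec_of_isometry [DecidableEq ι] {M : Matrix κ ι ℂ} (hM : Mᴴ * M = 1) (x : ι → ℂ) :
    sumSq (M *ᵥ x) = sumSq x := by
  have h := ofReal_sumSq_mulVec M x
  rw [hM, one_mulVec, ← ofReal_sumSq] at h
  exact_mod_cast h

/-- The complementary projection of an isometry does not increase the norm. -/
lemma sumSq_compl_projection_le [DecidableEq ι] [DecidableEq κ] {Q : Matrix κ ι ℂ}
    (hQ : Qᴴ * Q = 1) (x : κ → ℂ) : sumSq ((1 - Q * Qᴴ) *ᵥ x) ≤ sumSq x := by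
  have hP : (1 - Q * Qᴴ)ᴴ * (1 - Q * Qᴴ) = 1 - Q * Qᴴ := by
    have h : Q * Qᴴ * (Q * Qᴴ) = Q * Qᴴ := by
      rw [Matrix.mul_assoc, ← Matrix.mul_assoc Qᴴ, hQ, Matrix.one_mul]
    simp [Matrix.sub_mul, Matrix.mul_sub, h]
  have h := ofReal_sumSq_mulVec (1 - Q * Qᴴ) x
  have h' := ofReal_sumSq_mulVec Qᴴ x
  rw [conjTranspose_conjTranspose] at h'
  rw [hP, congrArg (star x ⬝ᵥ ·) (sub_mulVec 1 (Q * Qᴴ) x)] at h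
  simp only [one_mulVec, dotProduct_sub, ← h', ← ofReal_sumSq] at h
  have h'' : sumSq ((1 - Q * Qᴴ) *ᵥ x) = sumSq x - sumSq (Qᴴ *ᵥ x) := by exact_mod_cast h
  linarith [sumSq_nonneg (Qᴴ *ᵥ x)]

/-- In the coordinates of an orthonormal eigenbasis of `Mᴴ * M`, the form `x ↦ ‖M x‖²` is
diagonal. -/
lemma exists_eigencoordinates [DecidableEq ι] (M : Matrix κ ι ℂ) :
    ∃ E : Matrix ι ι ℂ, (∀ x, sumSq (E *ᵥ x) = sumSq x) ∧ ∀ x, sumSq (M *ᵥ x) =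
      ∑ i, (isHermitian_conjTranspose_mul_self M).eigenvalues i * ‖(E *ᵥ x) i‖ ^ 2 := by
  set hM := isHermitian_conjTranspose_mul_self M
  set W : Matrix ι ι ℂ := hM.eigenvectorUnitary.val
  have hW : W * star W = 1 := Unitary.coe_mul_star_self _
  refine ⟨Wᴴ, sumSq_mulVec_of_isometry (by rwa [conjTranspose_conjTranspose]), fun x => ?_⟩
  have h := ofReal_sumSq_mulVec M x
  have hs : Mᴴ * M = W * diagonal (RCLike.ofReal ∘ hM.eigenvalues) * Wᴴ := by
    conv_lhs => rw [hM.spectral_theorem, Unitary.conjStarAlgAut_apply]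
    rfl
  have hx : star x ᵥ* W = star (Wᴴ *ᵥ x) := by rw [star_mulVec, conjTranspose_conjTranspose]
  rw [hs, ← mulVec_mulVec, ← mulVec_mulVec, dotProduct_mulVec, hx] at h
  apply Complex.ofReal_injective
  rw [h]
  simp only [dotProduct, mulVec_diagonal, Pi.star_apply, RCLike.star_def, Function.comp_apply,
    Complex.ofReal_sum, Complex.ofReal_mul, Complex.ofReal_pow, ← Complex.conj_mul']
  refine Finset.sum_congr rfl fun i _ => ?_
  simp only [RCLike.ofReal_eq_complex_ofReal]
  ring

end SumSq

/-- In a decreasingly sorted list, an entry is at most `b` if at most as many entries as its index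
exceed `b`. -/
lemma List.Pairwise.getD_le_of_countP_le {l : List ℝ} (hl : l.Pairwise (· ≥ ·)) {b : ℝ} (hb : 0 ≤ b)
    {i : ℕ} (hi : l.countP (b < ·) ≤ i) : l.getD i 0 ≤ b := by
  by_contra! h
  have hlen : i < l.length := by
    by_contra! hle
    rw [List.getD_eq_default _ _ hle] at h
    linarith
  rw [List.getD_eq_getElem _ _ hlen] at h
  have hall : (l.take (i + 1)).countP (b < ·) = (l.take (i + 1)).length := by
    rw [List.countP_eq_length]
    intro a ha
    obtain ⟨j, hj, rfl⟩ := List.mem_iff_getElem.mp ha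
    rw [List.length_take] at hj
    rw [List.getElem_take, decide_eq_true_eq]
    rcases Nat.lt_or_ge j i with hji | hji
    · exact h.trans_le (List.pairwise_iff_getElem.mp hl j i _ hlen hji)
    · obtain rfl : j = i := by omega
      exact h
  have hsub := (List.take_sublist (i + 1) l).countP_le (p := (b < ·))
  rw [hall, List.length_take] at hsub
  omega

lemma countP_ofFn_eq_card {n : ℕ} (f : Fin n → ℝ) (p : ℝ → Prop) [DecidablePred p] :
    (List.ofFn f).countP p = Fintype.card {i // p (f i)} := by
  rw [← Multiset.coe_countP, ← Fin.univ_val_map, Multiset.countP_map, Fintype.card_subtype]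
  rfl

/-- One half of the Courant–Fischer principle: if `‖M x‖ ≤ b ‖x‖` on the kernel of a linear map
into a `d`-dimensional space, then the `d`-th singular value is at most `b`. -/
lemma sval_le_of_forall_ker {m n : ℕ} (M : Matrix (Fin m) (Fin n) ℂ) {p : Type*} [Fintype p]
    (L : (Fin n → ℂ) →ₗ[ℂ] (p → ℂ)) {b : ℝ} (hb : 0 ≤ b)
    (h : ∀ x, L x = 0 → sumSq (M *ᵥ x) ≤ b ^ 2 * sumSq x) :
    sval M (Fintype.card p) ≤ b := by
  obtain ⟨E, hE, hEM⟩ := exists_eigencoordinates M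
  set ev := (isHermitian_conjTranspose_mul_self M).eigenvalues
  refine (List.pairwise_insertionSort (· ≥ ·) _).getD_le_of_countP_le hb ?_
  rw [(List.perm_insertionSort (· ≥ ·) _).countP_eq, List.map_ofFn]
  rw [countP_ofFn_eq_card _ (b < ·)]
  by_contra! hlt
  let G : Fin n → Prop := fun i => b < (Real.sqrt ∘ ev) i
  let restr : (Fin n → ℂ) →ₗ[ℂ] ({i // ¬ G i} → ℂ) :=
    LinearMap.funLeft ℂ ℂ Subtype.val ∘ₗ E.mulVecLin
  have hker : (L.prod restr).ker ≠ ⊥ := by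
    apply LinearMap.ker_ne_bot_of_finrank_lt
    have := Fintype.card_subtype_compl G
    have hle := Fintype.card_subtype_le G
    simp only [Module.finrank_prod, Module.finrank_fintype_fun_eq_card, Fintype.card_fin] at *
    change Fintype.card p < Fintype.card {i // G i} at hlt
    omega
  obtain ⟨x, hx, hx0⟩ := (Submodule.ne_bot_iff _).mp hker
  rw [LinearMap.mem_ker, LinearMap.prod_apply] at hx
  replace hx := Prod.mk_eq_zero.mp hx
  have hz : ∀ i, ¬ G i → (E *ᵥ x) i = 0 := fun i hi => congrFun hx.2 ⟨i, hi⟩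
  have hpos : 0 < sumSq (E *ᵥ x) := by rw [hE]; exact sumSq_pos hx0
  have hle := h x hx.1
  rw [hEM, ← hE, sumSq, Finset.mul_sum] at hle
  have hEx : E *ᵥ x ≠ 0 := by
    intro h0
    simp [h0, sumSq] at hpos
  obtain ⟨i, hi⟩ := Function.ne_iff.mp hEx
  have hev : ∀ i, G i → b ^ 2 < ev i := fun i hi => (Real.lt_sqrt hb).mp hi
  refine absurd hle (not_le.mpr (Finset.sum_lt_sum (fun i _ => ?_) ⟨i, Finset.mem_univ i, ?_⟩))
  · by_cases hG : G i
    · exact mul_le_mul_of_nonneg_right (hev i hG).le (sq_nonneg _)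
    · simp [hz i hG]
  · have hG : G i := by
      by_contra hG
      exact hi (hz i hG)
    have hn : 0 < ‖(E *ᵥ x) i‖ := norm_pos_iff.mpr hi
    exact mul_lt_mul_of_pos_right (hev i hG) (by positivity)

lemma sval_nonneg {m n : ℕ} (M : Matrix (Fin m) (Fin n) ℂ) (j : ℕ) : 0 ≤ sval M j := by
  unfold sval
  rw [List.getD_eq_getElem?_getD]
  rcases h : (List.insertionSort (· ≥ ·) ((List.ofFn
    (isHermitian_conjTranspose_mul_self M).eigenvalues).map Real.sqrt))[j]? with _ | a
  · simp
  · have ha := List.mem_of_getElem? h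
    rw [List.mem_insertionSort, List.mem_map] at ha
    obtain ⟨c, -, rfl⟩ := ha
    exact Real.sqrt_nonneg c

lemma sqrt_eigenvalues_le_sval_zero {m n : ℕ} (M : Matrix (Fin m) (Fin n) ℂ) (i : Fin n) :
    √((isHermitian_conjTranspose_mul_self M).eigenvalues i) ≤ sval M 0 := by
  unfold sval
  set l := (List.ofFn (isHermitian_conjTranspose_mul_self M).eigenvalues).map Real.sqrt
  have hmem : √((isHermitian_conjTranspose_mul_self M).eigenvalues i) ∈
      l.insertionSort (· ≥ ·) := by
    rw [List.mem_insertionSort]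
    exact List.mem_map_of_mem (List.mem_ofFn.mpr ⟨i, rfl⟩)
  have hs := List.pairwise_insertionSort (· ≥ ·) l
  generalize l.insertionSort (· ≥ ·) = l' at hmem hs ⊢
  rcases l' with _ | ⟨a, t⟩
  · simp at hmem
  · rcases List.mem_cons.mp hmem with h | h
    · simp [h]
    · exact (List.pairwise_cons.mp hs).1 _ h

/-- The largest singular value bounds the operator norm. -/
lemma sumSq_mulVec_le {m n : ℕ} (M : Matrix (Fin m) (Fin n) ℂ) (x : Fin n → ℂ) :
    sumSq (M *ᵥ x) ≤ sval M 0 ^ 2 * sumSq x := by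
  obtain ⟨E, hE, hEM⟩ := exists_eigencoordinates M
  rw [hEM, ← hE x, sumSq, Finset.mul_sum]
  refine Finset.sum_le_sum fun i _ => mul_le_mul_of_nonneg_right ?_ (sq_nonneg _)
  exact (Real.sqrt_le_left (sval_nonneg M 0)).mp (sqrt_eigenvalues_le_sval_zero M i)

/-- `rpinv` is a right inverse of a matrix of full row rank. -/
lemma mul_rpinv {a b : ℕ} {M : Matrix (Fin a) (Fin b) ℂ} (hM : M.rank = a) : M * rpinv M = 1 := by
  have hunit : IsUnit (M * Mᴴ) := by
    rw [← mulVec_surjective_iff_isUnit]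
    have hr : (M * Mᴴ).mulVecLin.range = ⊤ := by
      apply Submodule.eq_top_of_finrank_eq
      rw [Module.finrank_fintype_fun_eq_card, Fintype.card_fin]
      open scoped ComplexOrder in
      exact (rank_self_mul_conjTranspose M).trans hM
    exact LinearMap.range_eq_top.mp hr
  rw [rpinv, ← Matrix.mul_assoc, mul_nonsing_inv _ ((isUnit_iff_isUnit_det _).mp hunit)]

lemma diagRect_zero_mulVec (σ : ℕ → ℝ) {a b : ℕ} (v : Fin b → ℂ) (i : Fin a) :
    (diagRect σ 0 a b *ᵥ v) i = if h : (i : ℕ) < b then (σ i : ℂ) * v ⟨i, h⟩ else 0 := by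
  simp only [mulVec, dotProduct, diagRect, of_apply, zero_add, ite_mul, zero_mul]
  split_ifs with h
  · rw [Finset.sum_eq_single ⟨i, h⟩]
    · simp
    · intro j _ hj
      exact if_neg fun e => hj (Fin.ext e.symm)
    · simp
  · exact Finset.sum_eq_zero fun j _ => if_neg fun e : (i : ℕ) = j => h (e ▸ j.isLt)

lemma conjTranspose_diagRect_zero (σ : ℕ → ℝ) (a b : ℕ) :
    (diagRect σ 0 a b)ᴴ = diagRect σ 0 b a := by
  ext i j
  by_cases h : (i : ℕ) = j
  · simp [diagRect, h]
  · simp [diagRect, h, Ne.symm h]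

/-- Entries of `(D * Dᴴ) ^ q * D` applied to a vector, for a rectangular diagonal matrix `D`. -/
lemma diagRect_power_mulVec (σ : ℕ → ℝ) {a b : ℕ} (q : ℕ) (v : Fin b → ℂ) (i : Fin a) :
    (((diagRect σ 0 a b * (diagRect σ 0 a b)ᴴ) ^ q * diagRect σ 0 a b) *ᵥ v) i =
      if h : (i : ℕ) < b then (σ i : ℂ) ^ (2 * q + 1) * v ⟨i, h⟩ else 0 := by
  induction q with
  | zero => simp [diagRect_zero_mulVec]
  | succ q ih =>
    rw [conjTranspose_diagRect_zero] at ih ⊢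
    rw [pow_succ', Matrix.mul_assoc, ← mulVec_mulVec, ← mulVec_mulVec, diagRect_zero_mulVec]
    split_ifs with h
    · rw [diagRect_zero_mulVec, dif_pos i.isLt, ih, dif_pos h]
      ring
    · rfl

/-- The power scheme diagonalizes together with `A`. -/
lemma power_scheme_eq {m n : ℕ} {U : Matrix (Fin m) (Fin m) ℂ} {V : Matrix (Fin n) (Fin n) ℂ}
    (hU : Uᴴ * U = 1) (hV : Vᴴ * V = 1) (D : Matrix (Fin m) (Fin n) ℂ) (q : ℕ) :
    (U * D * Vᴴ * (U * D * Vᴴ)ᴴ) ^ q * (U * D * Vᴴ) = U * ((D * Dᴴ) ^ q * D) * Vᴴ := by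
  have hAA : U * D * Vᴴ * (U * D * Vᴴ)ᴴ = U * (D * Dᴴ) * Uᴴ := by
    simp only [conjTranspose_mul, conjTranspose_conjTranspose, Matrix.mul_assoc]
    rw [← Matrix.mul_assoc Vᴴ, hV, Matrix.one_mul]
  rw [hAA]
  induction q with
  | zero => simp
  | succ q ih =>
    rw [pow_succ', Matrix.mul_assoc, ih, pow_succ']
    simp only [Matrix.mul_assoc]
    rw [← Matrix.mul_assoc Uᴴ, hU, Matrix.one_mul]

lemma sum_dite_lt_le {m n : ℕ} (f : Fin n → ℝ) (hf : ∀ i, 0 ≤ f i) :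
    ∑ i : Fin m, (if h : (i : ℕ) < n then f ⟨i, h⟩ else 0) ≤ ∑ i, f i := by
  let g : ℕ → ℝ := fun i => if h : i < n then f ⟨i, h⟩ else 0
  have hg : ∀ i, 0 ≤ g i := fun i => by
    dsimp only [g]
    split_ifs
    exacts [hf _, le_rfl]
  have hfg : ∑ i, f i = ∑ i ∈ Finset.range n, g i := by
    rw [← Fin.sum_univ_eq_sum_range]
    simp [g]
  rw [hfg, Fin.sum_univ_eq_sum_range g m, ← Finset.sum_filter_of_ne (p := (· < n))]
  · refine Finset.sum_le_sum_of_subset_of_nonneg (fun i hi => ?_) fun i _ _ => hg i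
    exact Finset.mem_range.mpr (Finset.mem_filter.mp hi).2
  · intro i _ hi
    by_contra h
    exact hi (dif_neg h)

/-- The distance to the range of `Q` is at most the distance to any of its points. -/
lemma sumSq_compl_projection_le_sub {ι κ : Type*} [Fintype ι] [Fintype κ] [DecidableEq ι]
    [DecidableEq κ] {Q : Matrix κ ι ℂ} (hQ : Qᴴ * Q = 1) (v : κ → ℂ) (r : ι → ℂ) :
    sumSq ((1 - Q * Qᴴ) *ᵥ v) ≤ sumSq (v - Q *ᵥ r) := by
  have hz : (1 - Q * Qᴴ) *ᵥ (Q *ᵥ r) = 0 := by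
    rw [mulVec_mulVec, Matrix.sub_mul, Matrix.mul_assoc, hQ, Matrix.one_mul, Matrix.mul_one,
      sub_self, zero_mulVec]
  have h := sumSq_compl_projection_le hQ (v - Q *ᵥ r)
  rwa [mulVec_sub, hz, sub_zero] at h

lemma colsL_mulVec {a b c : ℕ} (M : Matrix (Fin a) (Fin (b + c)) ℂ) (x : Fin b → ℂ) :
    colsL M *ᵥ x = M *ᵥ Fin.append x 0 := by
  ext i
  simp [mulVec, dotProduct, Fin.sum_univ_add, colsL]

lemma sumSq_append {a b : ℕ} (x : Fin a → ℂ) (y : Fin b → ℂ) :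
    sumSq (Fin.append x y) = sumSq x + sumSq y := by
  simp [sumSq, Fin.sum_univ_add]

/-- The squared distance from `(x, 0)` to the best multiple of `(x, h)`. -/
lemma sumSq_append_sub_smul_le {a b : ℕ} (x : Fin a → ℂ) (h : Fin b → ℂ) {t : ℝ}
    (ht : sumSq h ≤ t ^ 2 * sumSq x) :
    sumSq (Fin.append x 0 - ((1 / (1 + t ^ 2) : ℝ) : ℂ) • Fin.append x h) ≤
      (t / √(1 + t ^ 2)) ^ 2 * sumSq x := by
  set c : ℝ := 1 / (1 + t ^ 2) with hc
  have hpos : 0 < 1 + t ^ 2 := by positivity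
  have hsplit : Fin.append x 0 - (c : ℂ) • Fin.append x h =
      Fin.append (((1 - c : ℝ) : ℂ) • x) (((-c : ℝ) : ℂ) • h) := by
    ext i
    refine Fin.addCases (fun i => ?_) (fun i => ?_) i
    · simp [sub_mul]
    · simp
  have hsmul : ∀ {d : ℕ} (r : ℝ) (v : Fin d → ℂ), sumSq ((r : ℂ) • v) = r ^ 2 * sumSq v := by
    intro d r v
    simp [sumSq, Finset.mul_sum, mul_pow]
  rw [hsplit, sumSq_append, hsmul, hsmul, div_pow, Real.sq_sqrt hpos.le]
  calc (1 - c) ^ 2 * sumSq x + (-c) ^ 2 * sumSq h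
      ≤ (1 - c) ^ 2 * sumSq x + (-c) ^ 2 * (t ^ 2 * sumSq x) := by gcongr
    _ = t ^ 2 / (1 + t ^ 2) * sumSq x := by
      rw [hc]
      field_simp
      ring

/-- The trailing block of `D ^ p [Σ_k ^ (-p) x; F Σ_k ^ (-p) x]`, where `x` is supported on the
first `j + 1` coordinates, is small. -/
lemma sumSq_tail_le {k m₂ n₂ : ℕ} {σ : ℕ → ℝ} (hσ0 : ∀ i, 0 ≤ σ i)
    (hσm : ∀ i j, i ≤ j → σ j ≤ σ i) (p : ℕ) (F : Matrix (Fin n₂) (Fin k) ℂ) {j : Fin k}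
    (hj : 0 < σ j) {x : Fin k → ℂ} (hx : ∀ i, j < i → x i = 0) :
    sumSq (fun i : Fin m₂ => if h : (i : ℕ) < n₂ then
        (σ (k + i) : ℂ) ^ p * (F *ᵥ fun l => x l / (σ l : ℂ) ^ p) ⟨i, h⟩ else 0) ≤
      ((σ k / σ j) ^ p * sval F 0) ^ 2 * sumSq x := by
  set y : Fin k → ℂ := fun l => x l / (σ l : ℂ) ^ p
  have hy : sumSq y ≤ (1 / σ j ^ p) ^ 2 * sumSq x := by
    rw [sumSq, sumSq, Finset.mul_sum]
    refine Finset.sum_le_sum fun i _ => ?_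
    rw [← mul_pow]
    refine pow_le_pow_left₀ (norm_nonneg _) ?_ 2
    rcases lt_or_ge j i with h | h
    · simp [y, hx i h]
    · have hi := hσm i j h
      have hp : 0 < σ j ^ p := pow_pos hj p
      simp only [y, norm_div, norm_pow, Complex.norm_real, Real.norm_of_nonneg (hσ0 i)]
      rw [div_eq_mul_one_div, mul_comm]
      gcongr
  calc _ ≤ ∑ i : Fin m₂, (if h : (i : ℕ) < n₂ then
          (σ k ^ p) ^ 2 * ‖(F *ᵥ y) ⟨i, h⟩‖ ^ 2 else 0) := by
        refine Finset.sum_le_sum fun i _ => ?_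
        dsimp only
        split_ifs with h
        · rw [norm_mul, norm_pow, Complex.norm_real, Real.norm_of_nonneg (hσ0 _), mul_pow]
          have h1 := hσm k (k + i) (Nat.le_add_right k i)
          have h0 := hσ0 (k + i)
          gcongr
        · simp
    _ ≤ ∑ i, (σ k ^ p) ^ 2 * ‖(F *ᵥ y) i‖ ^ 2 :=
        sum_dite_lt_le (fun i => (σ k ^ p) ^ 2 * ‖(F *ᵥ y) i‖ ^ 2) fun i => by positivity
    _ = (σ k ^ p) ^ 2 * sumSq (F *ᵥ y) := by rw [sumSq, Finset.mul_sum]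
    _ ≤ (σ k ^ p) ^ 2 * (sval F 0 ^ 2 * ((1 / σ j ^ p) ^ 2 * sumSq x)) := by
        gcongr
        exact (sumSq_mulVec_le F y).trans (by gcongr)
    _ = ((σ k / σ j) ^ p * sval F 0) ^ 2 * sumSq x := by
        rw [div_pow]
        ring

/-- Theorem 3.1 (left singular subspace): bounds for the canonical angles
`θ_1 ≤ … ≤ θ_k` between the column spaces of `U_k` and `Û = Q·U_B`. -/
theorem canonical_angles_left
    {k m₂ n₂ ρ : ℕ} (q : ℕ) (hk : 1 ≤ k)
    (A : Matrix (Fin (k + m₂)) (Fin (k + n₂)) ℂ)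
    (U : Matrix (Fin (k + m₂)) (Fin (k + m₂)) ℂ)
    (V : Matrix (Fin (k + n₂)) (Fin (k + n₂)) ℂ)
    (σ : ℕ → ℝ)
    (hU : Uᴴ * U = 1) (hU' : U * Uᴴ = 1)
    (hV : Vᴴ * V = 1) (hV' : V * Vᴴ = 1)
    (hσ0 : ∀ i, 0 ≤ σ i) (hσm : ∀ i j, i ≤ j → σ j ≤ σ i)
    (hA : A = U * diagRect σ 0 (k + m₂) (k + n₂) * Vᴴ)
    (hrank : 0 < σ (k - 1)) (hgap : σ k < σ (k - 1))
    (Ω : Matrix (Fin (k + n₂)) (Fin (k + ρ)) ℂ)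
    (hΩ : ((colsL V)ᴴ * Ω).rank = k)
    (Q : Matrix (Fin (k + m₂)) (Fin (k + ρ)) ℂ)
    (R : Matrix (Fin (k + ρ)) (Fin (k + ρ)) ℂ)
    (hQ : Qᴴ * Q = 1) (hR : R.BlockTriangular id)
    (hQR : (A * Aᴴ) ^ q * A * Ω = Q * R)
    (UB : Matrix (Fin (k + ρ)) (Fin (k + ρ)) ℂ)
    (Vh : Matrix (Fin (k + n₂)) (Fin (k + ρ)) ℂ)
    (σh : ℕ → ℝ)
    (hUB : UBᴴ * UB = 1) (hUB' : UB * UBᴴ = 1)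
    (hVh : Vhᴴ * Vh = 1)
    (hσh0 : ∀ i, 0 ≤ σh i) (hσhm : ∀ i j, i ≤ j → σh j ≤ σh i)
    (hB : Qᴴ * A = UB * diagRect σh 0 (k + ρ) (k + ρ) * Vhᴴ)
    :
    ∀ j : Fin k,
      sval ((1 - Q * UB * (Q * UB)ᴴ) * colsL U) (k - 1 - (j : ℕ)) ≤
        (σ k / σ (j : ℕ)) ^ (2 * q + 1) * sval ((colsR V)ᴴ * Ω * rpinv ((colsL V)ᴴ * Ω)) 0 /
          Real.sqrt (1 + (σ k / σ (j : ℕ)) ^ (4 * q + 2) * (sval ((colsR V)ᴴ * Ω * rpinv ((colsL V)ᴴ * Ω)) 0) ^ 2) := by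
  intro j
  set F := (colsR V)ᴴ * Ω * rpinv ((colsL V)ᴴ * Ω)
  set t : ℝ := (σ k / σ (j : ℕ)) ^ (2 * q + 1) * sval F 0 with ht
  have ht0 : 0 ≤ t :=
    mul_nonneg (pow_nonneg (div_nonneg (hσ0 _) (hσ0 _)) _) (sval_nonneg F 0)
  have htsq : (σ k / σ (j : ℕ)) ^ (4 * q + 2) * sval F 0 ^ 2 = t ^ 2 := by
    rw [ht]
    ring
  have hpos : ∀ i : Fin k, 0 < σ i := fun i => hrank.trans_le (hσm _ _ (by omega))
  have hP : Q * UB * (Q * UB)ᴴ = Q * Qᴴ := by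
    rw [conjTranspose_mul, Matrix.mul_assoc, ← Matrix.mul_assoc UB, hUB', Matrix.one_mul]
  have hcard : Fintype.card {i : Fin k // j < i} = k - 1 - j := by
    rw [Fintype.card_subtype, Finset.filter_lt_eq_Ioi, Fin.card_Ioi]
  rw [htsq, hP, ← hcard]
  refine sval_le_of_forall_ker _ (LinearMap.funLeft ℂ ℂ Subtype.val) (by positivity) fun x hx => ?_
  have hx0 : ∀ i, j < i → x i = 0 := fun i hi => congrFun hx ⟨i, hi⟩
  set y : Fin k → ℂ := fun l => x l / (σ l : ℂ) ^ (2 * q + 1)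
  set h : Fin m₂ → ℂ := fun i => if h : (i : ℕ) < n₂ then
    (σ (k + i) : ℂ) ^ (2 * q + 1) * (F *ᵥ y) ⟨i, h⟩ else 0 with hh
  -- The range of `Q` contains `U_k x + U_⊥ h`.
  have hrange : Q *ᵥ (R *ᵥ (rpinv ((colsL V)ᴴ * Ω) *ᵥ y)) = U *ᵥ Fin.append x h := by
    rw [mulVec_mulVec, ← hQR, hA, power_scheme_eq hU hV, Matrix.mul_assoc, Matrix.mul_assoc,
      ← mulVec_mulVec, ← mulVec_mulVec]
    congr 1
    have hL : ∀ i, ((Vᴴ * Ω) *ᵥ (rpinv ((colsL V)ᴴ * Ω) *ᵥ y)) (Fin.castAdd n₂ i) = y i := by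
      intro i
      change (((colsL V)ᴴ * Ω) *ᵥ (rpinv ((colsL V)ᴴ * Ω) *ᵥ y)) i = y i
      rw [mulVec_mulVec, mul_rpinv hΩ, one_mulVec]
    have hT : ∀ i, ((Vᴴ * Ω) *ᵥ (rpinv ((colsL V)ᴴ * Ω) *ᵥ y)) (Fin.natAdd k i) =
        (F *ᵥ y) i := by
      intro i
      change (((colsR V)ᴴ * Ω) *ᵥ (rpinv ((colsL V)ᴴ * Ω) *ᵥ y)) i = (F *ᵥ y) i
      rw [mulVec_mulVec]
    ext i
    rw [diagRect_power_mulVec]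
    refine Fin.addCases (fun i => ?_) (fun i => ?_) i
    · have hi : ((Fin.castAdd m₂ i : Fin (k + m₂)) : ℕ) < k + n₂ := by simp; omega
      have hne : (σ i : ℂ) ^ (2 * q + 1) ≠ 0 := pow_ne_zero _ (by exact_mod_cast (hpos i).ne')
      rw [dif_pos hi, Fin.append_left]
      refine (congrArg _ (hL i)).trans ?_
      exact mul_div_cancel₀ (x i) hne
    · rw [Fin.append_right, hh]
      by_cases hi : (i : ℕ) < n₂
      · rw [dif_pos (by simpa using hi)]
        simp only [dif_pos hi]
        exact congrArg _ (hT ⟨i, hi⟩)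
      · rw [dif_neg (by simpa using hi)]
        simp only [dif_neg hi]
  have htail : sumSq h ≤ t ^ 2 * sumSq x := sumSq_tail_le hσ0 hσm (2 * q + 1) F (hpos j) hx0
  set c : ℂ := ((1 / (1 + t ^ 2) : ℝ) : ℂ)
  calc sumSq (((1 - Q * Qᴴ) * colsL U) *ᵥ x)
      ≤ sumSq (colsL U *ᵥ x - Q *ᵥ (c • (R *ᵥ (rpinv ((colsL V)ᴴ * Ω) *ᵥ y)))) := by
        rw [← mulVec_mulVec]
        exact sumSq_compl_projection_le_sub hQ _ _
    _ = sumSq (Fin.append x 0 - c • Fin.append x h) := by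
        rw [mulVec_smul, hrange, colsL_mulVec, ← mulVec_smul, ← mulVec_sub,
          sumSq_mulVec_of_isometry hU]
    _ ≤ (t / √(1 + t ^ 2)) ^ 2 * sumSq x := sumSq_append_sub_smul_le x h htail
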